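/- Let e₀, e₁ denote the standard orthonormal basis of ℂ² and Φ± = (e₀ ⊗ e₀ ± e₁ ⊗ e₁)/√2 ∈ ℂ² ⊗ ℂ². Define Ξ = √(2/3) Φ⁺ ⊗ e₀ ⊗ e₀ + √(1/3) (e₁ ⊗ e₁) ⊗ e₁ ⊗ e₁ in (ℂ² ⊗ ℂ²) ⊗ ℂ² ⊗ ℂ² (slots RA, S, B). Then ⟨Φ⁻ ⊗ e₀ ⊗ e₀, Ξ⟩ = 0 and ⟨Φ⁻ ⊗ e₁ ⊗ e₀, Ξ⟩ = 0, and the contraction of Ξ against Φ⁻ in the RA slot equals −√(1/6) e₁ ⊗ e₁; in particular the B part of this contraction is the pure state e₁, so conditional on Ursula's outcome '−', Bob must have obtained outcome '1'. -/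

import Mathlib

open scoped TensorProduct

set_option synthInstance.maxHeartbeats 1000000
set_option maxHeartbeats 1000000

noncomputable section

/-- The qubit space `ℂ²`. -/
abbrev Q2 : Type := EuclideanSpace ℂ (Fin 2)

/-- The standard orthonormal basis `e₀, e₁` of `ℂ²`. -/
def e (i : Fin 2) : Q2 := EuclideanSpace.single i 1

/-- `√x` as a complex scalar. -/
def c (x : ℝ) : ℂ := (Real.sqrt x : ℂ)

/-- The linear functional `⟨φ| = ⟪φ, ·⟫` on an inner product space. -/
def bra {H : Type*} [NormedAddCommGroup H] [InnerProductSpace ℂ H] (φ : H) :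
    H →ₗ[ℂ] ℂ :=
  (innerSL ℂ φ).toLinearMap

/-- Contraction `(f ⊗ I) : H ⊗ M →ₗ M` of the first slot against a functional `f`. -/
def contractF {H M : Type*} [AddCommGroup H] [Module ℂ H] [AddCommGroup M]
    [Module ℂ M] (f : H →ₗ[ℂ] ℂ) : H ⊗[ℂ] M →ₗ[ℂ] M :=
  (TensorProduct.lid ℂ M).toLinearMap ∘ₗ TensorProduct.map f LinearMap.id

/-- Contraction `(⟨φ| ⊗ I) : H ⊗ M →ₗ M` against a vector `φ` in the first slot. -/
def contractFirst {H M : Type*} [NormedAddCommGroup H] [InnerProductSpace ℂ H]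
    [AddCommGroup M] [Module ℂ M] (φ : H) : H ⊗[ℂ] M →ₗ[ℂ] M :=
  contractF (bra φ)

/-- Contraction `(I ⊗ ⟨φ|) : M ⊗ H →ₗ M` against a vector `φ` in the last slot. -/
def contractLast {H M : Type*} [NormedAddCommGroup H] [InnerProductSpace ℂ H]
    [AddCommGroup M] [Module ℂ M] (φ : H) : M ⊗[ℂ] H →ₗ[ℂ] M :=
  (TensorProduct.rid ℂ M).toLinearMap ∘ₗ TensorProduct.map LinearMap.id (bra φ)

/-- The functional `f ⊗ g` on a binary tensor product. -/
def braT {H K : Type*} [AddCommGroup H] [Module ℂ H] [AddCommGroup K] [Module ℂ K]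
    (f : H →ₗ[ℂ] ℂ) (g : K →ₗ[ℂ] ℂ) : H ⊗[ℂ] K →ₗ[ℂ] ℂ :=
  LinearMap.mul' ℂ ℂ ∘ₗ TensorProduct.map f g

/-- The Bell state `Φ⁺ = (e₀ ⊗ e₀ + e₁ ⊗ e₁)/√2`. -/
def Φp : Q2 ⊗[ℂ] Q2 := (c 2)⁻¹ • (e 0 ⊗ₜ[ℂ] e 0 + e 1 ⊗ₜ[ℂ] e 1)

/-- The Bell state `Φ⁻ = (e₀ ⊗ e₀ − e₁ ⊗ e₁)/√2`. -/
def Φm : Q2 ⊗[ℂ] Q2 := (c 2)⁻¹ • (e 0 ⊗ₜ[ℂ] e 0 - e 1 ⊗ₜ[ℂ] e 1)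

/-- The functional `⟨Φ⁻| = (⟨e₀| ⊗ ⟨e₀| − ⟨e₁| ⊗ ⟨e₁|)/√2` on `ℂ² ⊗ ℂ²`
(the bra dual to `Φ⁻` with respect to the induced inner product). -/
def braΦm : Q2 ⊗[ℂ] Q2 →ₗ[ℂ] ℂ :=
  (c 2)⁻¹ • (braT (bra (e 0)) (bra (e 0)) - braT (bra (e 1)) (bra (e 1)))

/-- The state `Ξ` of the joint system (Alice together with qubit R, qubit S, Bob)
after the first three steps of the Frauchiger–Renner protocol, with slots
`RA, S, B` (associated as `RA ⊗ (S ⊗ B)`). -/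
def Ξ : (Q2 ⊗[ℂ] Q2) ⊗[ℂ] (Q2 ⊗[ℂ] Q2) :=
  c (2/3) • (Φp ⊗ₜ[ℂ] (e 0 ⊗ₜ[ℂ] e 0))
    + c (1/3) • ((e 1 ⊗ₜ[ℂ] e 1) ⊗ₜ[ℂ] (e 1 ⊗ₜ[ℂ] e 1))

@[simp]
theorem bra_e_e (i j : Fin 2) : bra (e i) (e j) = if i = j then 1 else 0 := by
  simp [bra, e, EuclideanSpace.inner_single_left]

@[simp]
theorem braT_tmul {H K : Type*} [AddCommGroup H] [Module ℂ H] [AddCommGroup K] [Module ℂ K]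
    (f : H →ₗ[ℂ] ℂ) (g : K →ₗ[ℂ] ℂ) (x : H) (y : K) :
    braT f g (x ⊗ₜ[ℂ] y) = f x * g y := by
  simp [braT]

@[simp]
theorem contractF_tmul {H M : Type*} [AddCommGroup H] [Module ℂ H] [AddCommGroup M]
    [Module ℂ M] (f : H →ₗ[ℂ] ℂ) (x : H) (y : M) :
    contractF f (x ⊗ₜ[ℂ] y) = f x • y := by
  simp [contractF]

/-- Evaluating `f ⊗ g` amounts to contracting the first slot and then applying `g`. -/
theorem braT_apply {H K : Type*} [AddCommGroup H] [Module ℂ H] [AddCommGroup K] [Module ℂ K]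
    (f : H →ₗ[ℂ] ℂ) (g : K →ₗ[ℂ] ℂ) (z : H ⊗[ℂ] K) :
    braT f g z = g (contractF f z) := by
  induction z with
  | zero => simp
  | tmul x y => simp
  | add x y hx hy => simp [hx, hy]

theorem braΦm_Φp : braΦm Φp = 0 := by
  simp [braΦm, Φp]

theorem braΦm_e_one_tmul_e_one : braΦm (e 1 ⊗ₜ[ℂ] e 1) = -(c 2)⁻¹ := by
  simp [braΦm]

theorem c_one_third_mul_inv_c_two : c (1/3) * (c 2)⁻¹ = c (1/6) := by
  rw [c, c, c, ← Complex.ofReal_inv, ← Complex.ofReal_mul, ← Real.sqrt_inv,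
    ← Real.sqrt_mul (by norm_num)]
  norm_num

theorem contractF_braΦm_Ξ : contractF braΦm Ξ = (-(c (1/6))) • (e 1 ⊗ₜ[ℂ] e 1) := by
  rw [Ξ, map_add, map_smul, map_smul, contractF_tmul, contractF_tmul, braΦm_Φp,
    braΦm_e_one_tmul_e_one, zero_smul, smul_zero, zero_add, smul_smul, mul_neg,
    c_one_third_mul_inv_c_two]

theorem c_ne_zero {x : ℝ} (hx : 0 < x) : c x ≠ 0 :=
  Complex.ofReal_ne_zero.mpr (Real.sqrt_pos.mpr hx).ne'

theorem e_ne_zero (i : Fin 2) : e i ≠ 0 := by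
  simp [e]

/-- `Ξ` is orthogonal to `Φ⁻ ⊗ e₀ ⊗ e₀` and to `Φ⁻ ⊗ e₁ ⊗ e₀`, and
the contraction of `Ξ` against `Φ⁻` in the `RA` slot equals `−√(1/6) e₁ ⊗ e₁`;
in particular the `B` part of this contraction is the pure state `e₁`: conditional
on Ursula's outcome `−`, Bob must have obtained outcome `1`. -/
theorem frauchiger_renner_first_inference :
    braT braΦm (braT (bra (e 0)) (bra (e 0))) Ξ = 0 ∧
    braT braΦm (braT (bra (e 1)) (bra (e 0))) Ξ = 0 ∧
    contractF braΦm Ξ = (-(c (1/6))) • (e 1 ⊗ₜ[ℂ] e 1) ∧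
    (∃ χ : Q2, χ ≠ 0 ∧ contractF braΦm Ξ = χ ⊗ₜ[ℂ] e 1) := by
  refine ⟨?_, ?_, contractF_braΦm_Ξ, (-(c (1/6))) • e 1, ?_, ?_⟩
  · simp [braT_apply braΦm, contractF_braΦm_Ξ]
  · simp [braT_apply braΦm, contractF_braΦm_Ξ]
  · exact smul_ne_zero (neg_ne_zero.mpr (c_ne_zero (by norm_num))) (e_ne_zero 1)
  · rw [contractF_braΦm_Ξ, TensorProduct.smul_tmul']

end
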